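/- arXiv:1810.04054 — 5 statements merged into one kernel-verified Lean document; each statement's English description precedes it below -/
import Mathlib

section
/- Let α ∈ ℝ. The function w(z) = M(−α/2, 1/2, z) is twice differentiable on ℝ and satisfies Kummer's equation z w''(z) + (1/2 − z) w'(z) + (α/2) w(z) = 0 for all z ∈ ℝ. -/
noncomputable def poch (a : ℝ) (s : ℕ) : ℝ := ∏ i ∈ Finset.range s, (a + i)

/-- Kummer's confluent hypergeometric function `M(a,b,z)`,
defined by the everywhere-convergent series `M(a,b,z) = Σ_{s} (a)_s z^s / ((b)_s s!)`. -/
noncomputable def kummerM (a b z : ℝ) : ℝ :=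
  ∑' s : ℕ, poch a s / (poch b s * (Nat.factorial s)) * z ^ s

/-- Tricomi's confluent hypergeometric function
`U(a,b,z) = (1/Γ(a)) ∫_0^∞ e^{−z t} t^{a−1} (1+t)^{b−a−1} dt`. -/
noncomputable def tricomiU (a b z : ℝ) : ℝ :=
  (1 / Real.Gamma a) *
    ∫ t in Set.Ioi (0:ℝ), Real.exp (-z * t) * t ^ (a - 1) * (1 + t) ^ (b - a - 1)

theorem hs_congr {f g : ℕ → ℝ} {a : ℝ} (h : ∀ n, f n = g n) (hf : HasSum f a) : HasSum g a := by
  rwa [← funext h]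

def Entire (c : ℕ → ℝ) : Prop := ∀ r : ℝ, 0 ≤ r → Summable (fun n => |c n| * r ^ n)

def dco (c : ℕ → ℝ) (n : ℕ) : ℝ := ((n : ℝ) + 1) * c (n + 1)

theorem Entire.dco {c : ℕ → ℝ} (h : Entire c) : Entire (dco c) := by
  intro r hr
  have h1 := (summable_nat_add_iff 1).2 (h (2 * (r + 1)) (by positivity))
  refine Summable.of_nonneg_of_le (fun n => by positivity) (fun n => ?_) h1
  have h2 : (n : ℝ) + 1 ≤ 2 ^ (n + 1) := by
    exact_mod_cast (Nat.lt_two_pow_self (n := n + 1)).le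
  have h3 : r ^ n ≤ (r + 1) ^ (n + 1) := by
    calc r ^ n ≤ (r + 1) ^ n := by gcongr; linarith
      _ ≤ (r + 1) ^ (n + 1) := pow_le_pow_right₀ (by linarith) (by omega)
  have h4 : ((n : ℝ) + 1) * r ^ n ≤ 2 ^ (n + 1) * (r + 1) ^ (n + 1) := by gcongr
  have h5 : |_root_.dco c n| = ((n : ℝ) + 1) * |c (n + 1)| := by
    unfold _root_.dco
    rw [abs_mul, abs_of_nonneg (by positivity)]
  rw [h5, mul_pow]
  calc ((n : ℝ) + 1) * |c (n + 1)| * r ^ n = |c (n + 1)| * (((n : ℝ) + 1) * r ^ n) := by ring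
    _ ≤ _ := by gcongr

theorem Entire.summable {c : ℕ → ℝ} (h : Entire c) (z : ℝ) :
    Summable (fun n => c n * z ^ n) := by
  refine Summable.of_norm ?_
  simpa [abs_mul, abs_pow] using h |z| (abs_nonneg z)

theorem Entire.shift {c : ℕ → ℝ} (h : Entire c) (z : ℝ) :
    HasSum (fun n : ℕ => (n : ℝ) * c n * z ^ n) (z * ∑' n, _root_.dco c n * z ^ n) := by
  have h1 := ((h.dco.summable z).hasSum).mul_left z
  rw [← hasSum_nat_add_iff' 1]
  simp only [Finset.range_one, Finset.sum_singleton, Nat.cast_zero, zero_mul, sub_zero]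
  refine hs_congr (fun n => ?_) h1
  unfold _root_.dco
  push_cast
  ring

theorem Entire.hasDerivAt {c : ℕ → ℝ} (h : Entire c) (z : ℝ) :
    HasDerivAt (fun z => ∑' n, c n * z ^ n) (∑' n, _root_.dco c n * z ^ n) z := by
  set R := |z| + 1 with hR
  have hR0 : 0 ≤ R := by positivity
  have hu : Summable (fun n : ℕ => |c n * (n * R ^ (n - 1))|) := by
    rw [← summable_nat_add_iff 1]
    refine (h.dco R hR0).congr (fun n => ?_)
    unfold _root_.dco
    simp only [Nat.add_sub_cancel, abs_mul, abs_pow, abs_of_nonneg hR0]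
    push_cast
    ring
  have hz : z ∈ Metric.ball (0 : ℝ) R := by simp [hR]
  have key := hasDerivAt_tsum_of_isPreconnected (t := Metric.ball (0 : ℝ) R) hu
    Metric.isOpen_ball (convex_ball (0 : ℝ) R).isPreconnected
    (g := fun n z => c n * z ^ n) (g' := fun n z => c n * (n * z ^ (n - 1)))
    (fun n y _ => (hasDerivAt_pow n y).const_mul (c n))
    (fun n y hy => by
      have hy' : |y| ≤ R := by simpa using (Metric.mem_ball.1 hy).le
      rw [Real.norm_eq_abs]
      simp only [abs_mul, abs_pow, abs_of_nonneg hR0]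
      gcongr) hz (h.summable z) hz
  refine key.congr_deriv ?_
  have hs : Summable (fun n : ℕ => c n * (n * z ^ (n - 1))) := by
    rw [← summable_nat_add_iff 1]
    refine (h.dco.summable z).congr (fun n => ?_)
    unfold _root_.dco
    simp only [Nat.add_sub_cancel]
    push_cast
    ring
  refine Eq.trans hs.tsum_eq_zero_add ?_
  simp only [Nat.cast_zero, zero_mul, mul_zero, zero_add]
  refine tsum_congr (fun n => ?_)
  unfold _root_.dco
  simp only [Nat.add_sub_cancel]
  push_cast
  ring

noncomputable def kco (a : ℝ) (s : ℕ) : ℝ := poch a s / (poch (1 / 2) s * (Nat.factorial s))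

theorem kco_succ (a : ℝ) (n : ℕ) :
    kco a (n + 1) = (a + n) / ((1 / 2 + n) * (n + 1)) * kco a n := by
  have hp : poch (1 / 2) n ≠ 0 := by
    unfold poch
    exact Finset.prod_ne_zero_iff.2 (fun i _ => by positivity)
  have hf : (n.factorial : ℝ) ≠ 0 := by positivity
  have h1 : (1 / 2 + n : ℝ) ≠ 0 := by positivity
  have h2 : (n + 1 : ℝ) ≠ 0 := by positivity
  have e : ∀ x, poch x (n + 1) = poch x n * (x + n) := fun x => by
    unfold poch
    rw [Finset.prod_range_succ]
  unfold kco
  rw [e, e, Nat.factorial_succ, div_mul_div_comm]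
  push_cast
  congr 1 <;> ring

theorem kco_entire (a : ℝ) : Entire (kco a) := by
  intro r hr
  obtain ⟨N, hN⟩ := exists_nat_ge (2 * ((2 * |a| + 1) * r))
  refine summable_of_ratio_norm_eventually_le (r := 1 / 2) (by norm_num) ?_
  filter_upwards [Filter.eventually_ge_atTop N] with n hn
  have hn' : (N : ℝ) ≤ n := by exact_mod_cast hn
  have hn0 : (0 : ℝ) ≤ n := by positivity
  rw [kco_succ]
  simp only [norm_mul, norm_pow, Real.norm_eq_abs, abs_abs, abs_mul, abs_of_nonneg hr, pow_succ]
  have ha := abs_nonneg a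
  have h1 : |a + n| ≤ (2 * |a| + 1) * (1 / 2 + n) := by
    have := abs_add_le a n
    rw [abs_of_nonneg hn0] at this
    nlinarith [mul_nonneg ha hn0]
  have h2 : |(a + n) / ((1 / 2 + n) * (n + 1))| * r ≤ 1 / 2 := by
    rw [abs_div, abs_of_nonneg (a := (1 / 2 + n : ℝ) * (n + 1)) (by positivity), div_mul_eq_mul_div,
      div_le_iff₀ (by positivity)]
    calc |a + n| * r ≤ (2 * |a| + 1) * (1 / 2 + n) * r := by gcongr
      _ = (1 / 2 + n) * ((2 * |a| + 1) * r) := by ring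
      _ ≤ (1 / 2 + n) * ((n + 1) / 2) := by gcongr; linarith
      _ = _ := by ring
  calc _ = (|(a + n) / ((1 / 2 + n) * (n + 1))| * r) * (|kco a n| * r ^ n) := by ring
    _ ≤ _ := by gcongr

/-- `w(z) = M(−α/2, 1/2, z)` is twice differentiable on `ℝ` and satisfies
Kummer's equation `z w''(z) + (1/2 − z) w'(z) + (α/2) w(z) = 0` for all `z ∈ ℝ`. -/
theorem statement_2 (α : ℝ) :
    Differentiable ℝ (fun z : ℝ => kummerM (-α / 2) (1 / 2) z) ∧
    Differentiable ℝ (deriv (fun z : ℝ => kummerM (-α / 2) (1 / 2) z)) ∧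
    ∀ z : ℝ,
      z * deriv (deriv (fun z : ℝ => kummerM (-α / 2) (1 / 2) z)) z
        + (1 / 2 - z) * deriv (fun z : ℝ => kummerM (-α / 2) (1 / 2) z) z
        + (α / 2) * kummerM (-α / 2) (1 / 2) z = 0 := by
  have hE := kco_entire (-α / 2)
  have hw : (fun z : ℝ => kummerM (-α / 2) (1 / 2) z) = fun z => ∑' n, kco (-α / 2) n * z ^ n := rfl
  have hd : deriv (fun z : ℝ => kummerM (-α / 2) (1 / 2) z)
      = fun z => ∑' n, dco (kco (-α / 2)) n * z ^ n := by
    rw [hw]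
    exact funext fun z => (hE.hasDerivAt z).deriv
  have hdd : deriv (deriv (fun z : ℝ => kummerM (-α / 2) (1 / 2) z))
      = fun z => ∑' n, dco (dco (kco (-α / 2))) n * z ^ n := by
    rw [hd]
    exact funext fun z => (hE.dco.hasDerivAt z).deriv
  refine ⟨?_, ?_, fun z => ?_⟩
  · rw [hw]
    exact fun z => (hE.hasDerivAt z).differentiableAt
  · rw [hd]
    exact fun z => (hE.dco.hasDerivAt z).differentiableAt
  · rw [hdd, hd, show kummerM (-α / 2) (1 / 2) z = ∑' n, kco (-α / 2) n * z ^ n from rfl]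
    have s := (((hE.dco.shift z).add ((hE.dco.summable z).hasSum.mul_left (1 / 2))).sub
      (hE.shift z)).add ((hE.summable z).hasSum.mul_left (α / 2))
    have s0 := s.unique (a₂ := 0) (by
      refine hs_congr (fun n => ?_) (hasSum_zero : HasSum (fun _ : ℕ => (0 : ℝ)) 0)
      unfold dco
      rw [kco_succ]
      have h1 : (1 / 2 + n : ℝ) ≠ 0 := by positivity
      have h2 : (n + 1 : ℝ) ≠ 0 := by positivity
      have h3 : ((n : ℝ) + 1) * ((-α / 2 + n) / ((1 / 2 + n) * (n + 1)) * kco (-α / 2) n)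
          * (1 / 2 + n) = (-α / 2 + n) * kco (-α / 2) n := by
        field_simp
      linear_combination -z ^ n * h3)
    beta_reduce
    linear_combination s0
end

section
/- Let α ∈ ℝ, d > 0, and E, F ∈ ℝ. Define Ψ(x,t) = t^{α/2} [ E M(−α/2, 1/2, −η²) + F η M(−α/2 + 1/2, 3/2, −η²) ] with η = x/(2√(d t)), for t > 0. Then for every x ∈ ℝ and t > 0 the spatial derivative is ∂Ψ/∂x (x,t) = (t^{(α−1)/2}/√d) [ E α η M(−α/2 + 1, 3/2, −η²) + (F/2) M(−α/2 + 1/2, 1/2, −η²) ]. -/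
lemma kummer_aux_series (c : ℕ → ℝ) (K : ℝ) (hK : 0 ≤ K)
    (hc : ∀ s, |c s| ≤ K ^ s / (Nat.factorial s)) :
    (∀ z : ℝ, Summable fun s => c s * z ^ s) ∧
    (∀ z : ℝ, Summable fun s : ℕ => ((s : ℝ) + 1) * c (s + 1) * z ^ s) ∧
    ∀ z : ℝ, HasDerivAt (fun y => ∑' s, c s * y ^ s)
      (∑' s : ℕ, ((s : ℝ) + 1) * c (s + 1) * z ^ s) z := by
  have h1 : ∀ z : ℝ, Summable fun s => c s * z ^ s := by
    intro z
    refine Summable.of_norm_bounded (Real.summable_pow_div_factorial (K * |z|)) ?_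
    intro s
    rw [Real.norm_eq_abs, abs_mul, abs_pow, mul_pow, mul_div_right_comm]
    exact mul_le_mul_of_nonneg_right (hc s) (by positivity)
  have hb : ∀ (s : ℕ) (z R : ℝ), |z| ≤ R →
      |((s : ℝ) + 1) * c (s + 1) * z ^ s| ≤ K * ((K * R) ^ s / (Nat.factorial s)) := by
    intro s z R hz
    have hf : (0 : ℝ) < Nat.factorial s := by exact_mod_cast Nat.factorial_pos s
    have h := hc (s + 1)
    rw [Nat.factorial_succ] at h
    push_cast at h
    have hs : (0 : ℝ) < (s : ℝ) + 1 := by positivity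
    have hR : 0 ≤ R := (abs_nonneg z).trans hz
    rw [abs_mul, abs_mul, abs_of_pos hs, abs_pow]
    calc ((s : ℝ) + 1) * |c (s + 1)| * |z| ^ s
        ≤ ((s : ℝ) + 1) * (K ^ (s + 1) / (((s : ℝ) + 1) * Nat.factorial s)) * R ^ s := by
          gcongr
      _ = K * ((K * R) ^ s / (Nat.factorial s)) := by
          field_simp
          ring
  have hsum : ∀ R : ℝ, Summable fun s : ℕ => K * ((K * R) ^ s / (Nat.factorial s)) :=
    fun R => (Real.summable_pow_div_factorial (K * R)).mul_left K
  have h2 : ∀ z : ℝ, Summable fun s : ℕ => ((s : ℝ) + 1) * c (s + 1) * z ^ s := fun z =>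
    Summable.of_norm_bounded (hsum |z|) (fun s => hb s z |z| le_rfl)
  refine ⟨h1, h2, fun z => ?_⟩
  have hfun : (fun y : ℝ => ∑' s, c s * y ^ s)
      = fun y => c 0 + ∑' s : ℕ, c (s + 1) * y ^ (s + 1) := by
    funext y
    rw [(h1 y).tsum_eq_zero_add]
    simp
  rw [hfun]
  refine HasDerivAt.const_add _ ?_
  refine hasDerivAt_tsum_of_isPreconnected (t := Metric.ball (0 : ℝ) (|z| + 1)) (y₀ := z)
    (hsum (|z| + 1))
    Metric.isOpen_ball (convex_ball (0 : ℝ) (|z| + 1)).isPreconnected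
    (g := fun (s : ℕ) y => c (s + 1) * y ^ (s + 1))
    (g' := fun (s : ℕ) y => ((s : ℝ) + 1) * c (s + 1) * y ^ s) ?_ ?_ ?_ ?_ ?_
  · intro s y _
    have := (hasDerivAt_pow (s + 1) y).const_mul (c (s + 1))
    refine this.congr_deriv ?_
    rw [Nat.add_sub_cancel]
    push_cast
    ring
  · intro s y hy
    refine hb s y _ ?_
    simp at hy
    exact hy.le
  · simp
  · exact (summable_nat_add_iff 1).2 (h1 z)
  · simp

lemma poch_pos_aux (b : ℝ) (hb : 0 < b) (s : ℕ) : 0 < poch b s :=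
  Finset.prod_pos fun i _ => by positivity

lemma poch_succ_right (a : ℝ) (s : ℕ) : poch a (s + 1) = poch a s * (a + s) := by
  simp [poch, Finset.prod_range_succ]

lemma poch_succ_left (a : ℝ) (s : ℕ) : poch a (s + 1) = a * poch (a + 1) s := by
  simp only [poch, Finset.prod_range_succ']
  rw [mul_comm]
  congr 1
  · simp
  · refine Finset.prod_congr rfl fun i _ => ?_
    push_cast
    ring

lemma kummer_coeff_bound (a b : ℝ) (hb : 0 < b) (s : ℕ) :
    |poch a s / (poch b s * (Nat.factorial s))|
      ≤ (|a| / b + 1) ^ s / (Nat.factorial s) := by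
  have hf : (0 : ℝ) < Nat.factorial s := by exact_mod_cast Nat.factorial_pos s
  have hp := poch_pos_aux b hb s
  have key : ∀ s : ℕ, |poch a s| ≤ (|a| / b + 1) ^ s * poch b s := by
    intro s
    induction s with
    | zero => simp [poch]
    | succ n ih =>
      have hpn := poch_pos_aux b hb n
      have h1 : |a + n| ≤ (|a| / b + 1) * (b + n) := by
        have h2 : |a + n| ≤ |a| + n := by
          simpa using abs_add_le a (n : ℝ)
        have h3 : (|a| / b + 1) * (b + n) = |a| + n + (b + |a| / b * n) := by
          field_simp
          ring
        have : 0 ≤ b + |a| / b * n := by positivity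
        linarith
      rw [poch_succ_right, poch_succ_right, abs_mul]
      calc |poch a n| * |a + n|
          ≤ ((|a| / b + 1) ^ n * poch b n) * ((|a| / b + 1) * (b + n)) := by gcongr
        _ = _ := by ring
  rw [abs_div, abs_of_pos (mul_pos hp hf), ← div_div]
  gcongr
  rw [div_le_iff₀ hp]
  exact key s

lemma kummer_hasDerivAt (a b : ℝ) (hb : 0 < b) (z : ℝ) :
    HasDerivAt (kummerM a b) (a / b * kummerM (a + 1) (b + 1) z) z := by
  have h := (kummer_aux_series _ (|a| / b + 1) (by positivity)
    (kummer_coeff_bound a b hb)).2.2 z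
  refine HasDerivAt.congr_deriv (f := kummerM a b) h (Eq.symm ?_)
  unfold kummerM
  rw [← tsum_mul_left]
  refine tsum_congr fun s => ?_
  have hf : (0 : ℝ) < Nat.factorial s := by exact_mod_cast Nat.factorial_pos s
  have hp := poch_pos_aux (b + 1) (by positivity) s
  rw [poch_succ_left, poch_succ_left, Nat.factorial_succ]
  push_cast
  field_simp

lemma poch_three_half (s : ℕ) : poch (3 / 2) s = poch (1 / 2) s * (2 * s + 1) := by
  have h1 := poch_succ_left (1 / 2) s
  rw [poch_succ_right, show (1 / 2 + 1 : ℝ) = 3 / 2 by norm_num] at h1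
  linarith

lemma kummer_contig (a z : ℝ) :
    kummerM a (3 / 2) z + 2 * z * (a / (3 / 2) * kummerM (a + 1) (3 / 2 + 1) z)
      = kummerM a (1 / 2) z := by
  obtain ⟨h1, h2, h3⟩ := kummer_aux_series _ (|a| / (3 / 2) + 1) (by positivity)
    (kummer_coeff_bound a (3 / 2) (by norm_num))
  rw [(kummer_hasDerivAt a (3 / 2) (by norm_num) z).unique (h3 z)]
  obtain ⟨g1, -, -⟩ := kummer_aux_series _ (|a| / (1 / 2) + 1) (by positivity)
    (kummer_coeff_bound a (1 / 2) (by norm_num))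
  have e : ∀ s : ℕ, poch a s / (poch (1 / 2) s * (Nat.factorial s)) * z ^ s
      - poch a s / (poch (3 / 2) s * (Nat.factorial s)) * z ^ s
      = 2 * s * (poch a s / (poch (3 / 2) s * (Nat.factorial s))) * z ^ s := by
    intro s
    have hf : (0 : ℝ) < Nat.factorial s := by exact_mod_cast Nat.factorial_pos s
    have hp := poch_pos_aux (1 / 2) (by norm_num) s
    rw [poch_three_half]
    field_simp
    ring
  have hsub := (g1 z).tsum_sub (h1 z)
  have hs := (g1 z).sub (h1 z)
  rw [hs.tsum_eq_zero_add] at hsub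
  simp only [e] at hsub
  have : ∑' s : ℕ, 2 * ((s + 1 : ℕ) : ℝ) * (poch a (s + 1) /
      (poch (3 / 2) (s + 1) * (Nat.factorial (s + 1)))) * z ^ (s + 1)
      = 2 * z * ∑' s : ℕ, ((s : ℝ) + 1) * (poch a (s + 1) /
      (poch (3 / 2) (s + 1) * (Nat.factorial (s + 1)))) * z ^ s := by
    rw [← tsum_mul_left]
    refine tsum_congr fun s => ?_
    push_cast
    ring
  rw [this] at hsub
  simp only [kummerM]
  simp only [Nat.cast_zero, mul_zero, zero_mul, zero_add] at hsub
  linarith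

/-- the spatial derivative of
`Ψ(x,t) = t^{α/2}[E M(−α/2,1/2,−η²) + F η M(−α/2+1/2,3/2,−η²)]`, `η = x/(2√(dt))`,
is `Ψ_x(x,t) = (t^{(α−1)/2}/√d)[E α η M(−α/2+1,3/2,−η²) + (F/2) M(−α/2+1/2,1/2,−η²)]`. -/
theorem statement_5 (α d E F : ℝ) (hd : 0 < d)
    (Ψ : ℝ → ℝ → ℝ)
    (hΨ : ∀ x t : ℝ, Ψ x t =
      t ^ (α / 2) *
        (E * kummerM (-α / 2) (1 / 2) (-(x / (2 * Real.sqrt (d * t))) ^ 2)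
          + F * (x / (2 * Real.sqrt (d * t))) *
              kummerM (-α / 2 + 1 / 2) (3 / 2) (-(x / (2 * Real.sqrt (d * t))) ^ 2))) :
    ∀ x t : ℝ, 0 < t →
      deriv (fun y => Ψ y t) x =
        t ^ ((α - 1) / 2) / Real.sqrt d *
          (E * α * (x / (2 * Real.sqrt (d * t))) *
              kummerM (-α / 2 + 1) (3 / 2) (-(x / (2 * Real.sqrt (d * t))) ^ 2)
            + F / 2 * kummerM (-α / 2 + 1 / 2) (1 / 2) (-(x / (2 * Real.sqrt (d * t))) ^ 2)) := by
  intro x t ht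
  simp only [hΨ]
  set r := 2 * Real.sqrt (d * t) with hr
  have hsd : 0 < Real.sqrt d := Real.sqrt_pos.2 hd
  have hst : 0 < Real.sqrt t := Real.sqrt_pos.2 ht
  have hr2 : r = 2 * (Real.sqrt d * Real.sqrt t) := by rw [hr, Real.sqrt_mul hd.le]
  have hη : HasDerivAt (fun y : ℝ => y / r) (1 / r) x := (hasDerivAt_id x).div_const r
  have hz : HasDerivAt (fun y : ℝ => -(y / r) ^ 2) (-(2 * (x / r) * (1 / r))) x := by
    have h0 := (hη.pow 2).neg
    refine HasDerivAt.congr_deriv (f := fun y : ℝ => -(y / r) ^ 2) h0 ?_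
    simp
  have hA := (kummer_hasDerivAt (-α / 2) (1 / 2) (by norm_num) (-(x / r) ^ 2)).comp x hz
  have hB := (kummer_hasDerivAt (-α / 2 + 1 / 2) (3 / 2) (by norm_num) (-(x / r) ^ 2)).comp x hz
  have hT := ((hA.const_mul E).add ((hη.const_mul F).mul hB)).const_mul (t ^ (α / 2))
  refine (HasDerivAt.deriv hT).trans ?_
  have hc := kummer_contig (-α / 2 + 1 / 2) (-(x / r) ^ 2)
  have hp : t ^ (α / 2) = t ^ ((α - 1) / 2) * Real.sqrt t := by
    rw [Real.sqrt_eq_rpow, ← Real.rpow_add ht]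
    congr 1
    ring
  rw [← hc, show (1 / 2 + 1 : ℝ) = 3 / 2 by norm_num, hp]
  simp only [Function.comp]
  have hir : 1 / r * Real.sqrt t = 1 / (2 * Real.sqrt d) := by
    rw [hr2]
    field_simp
  have hdiv : ∀ X : ℝ, t ^ ((α - 1) / 2) / Real.sqrt d * X
      = t ^ ((α - 1) / 2) * (2 * (1 / r * Real.sqrt t)) * X := by
    intro X
    rw [hir]
    field_simp
  rw [hdiv]
  ring
end

section
/- Let α > 0 and ω > 0, and define f₁(x) = 1 / U(α/2 + 1/2, 1/2, x²ω²) for x > 0. Then f₁ is strictly increasing on (0,∞), f₁(x) tends to Γ(α/2 + 1)/√π as x → 0⁺, and f₁(x) tends to +∞ as x → +∞. -/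
open MeasureTheory Set Filter Topology

lemma aux_beta {a b : ℝ} (ha : 0 < a) (hb : 0 < b) :
    IntegrableOn (fun x : ℝ => x ^ (a - 1) * (1 - x) ^ (b - 1)) (Ioo 0 1) ∧
    ∫ x in Ioo (0:ℝ) 1, x ^ (a - 1) * (1 - x) ^ (b - 1) =
      Real.Gamma a * Real.Gamma b / Real.Gamma (a + b) := by
  have hc := Complex.betaIntegral_convergent (u := a) (v := b) (by simpa) (by simpa)
  rw [intervalIntegrable_iff_integrableOn_Ioo_of_le (by simp)] at hc
  have hcongr : EqOn (fun x : ℝ => RCLike.re ((x : ℂ) ^ ((a : ℂ) - 1) * (1 - (x : ℂ)) ^ ((b : ℂ) - 1)))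
      (fun x : ℝ => x ^ (a - 1) * (1 - x) ^ (b - 1)) (Ioo 0 1) := by
    intro x hx
    obtain ⟨h1, h2⟩ := hx
    beta_reduce
    norm_cast
    rw [← Complex.ofReal_cpow h1.le, ← Complex.ofReal_cpow (by linarith), RCLike.re_to_complex,
        Complex.re_mul_ofReal, Complex.ofReal_re]
  refine ⟨(integrableOn_congr_fun hcongr measurableSet_Ioo).1 hc.re, ?_⟩
  have h := ProbabilityTheory.beta_eq_betaIntegralReal a b ha hb
  rw [ProbabilityTheory.beta] at h
  rw [h, Complex.betaIntegral, intervalIntegral.integral_of_le (by norm_num),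
    integral_Ioc_eq_integral_Ioo, ← RCLike.re_to_complex, ← integral_re hc]
  exact (setIntegral_congr_fun measurableSet_Ioo hcongr).symm

lemma aux_image : (fun u : ℝ => u / (1 - u)) '' Ioo 0 1 = Ioi 0 := by
  ext t
  constructor
  · rintro ⟨u, hu, rfl⟩
    exact div_pos hu.1 (by linarith [hu.2])
  · intro ht
    have ht : 0 < t := ht
    refine ⟨t / (1 + t), ⟨by positivity, ?_⟩, ?_⟩
    · rw [div_lt_one (by positivity)]; linarith
    · have : 1 - t / (1 + t) = 1 / (1 + t) := by field_simp; ring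
      simp only [this]
      field_simp

lemma aux_main {a : ℝ} (ha : 0 < a) :
    IntegrableOn (fun t : ℝ => t ^ (a - 1) * (1 + t) ^ ((1 / 2 : ℝ) - a - 1)) (Ioi 0) ∧
    ∫ t in Ioi (0:ℝ), t ^ (a - 1) * (1 + t) ^ ((1 / 2 : ℝ) - a - 1) =
      Real.Gamma a * √Real.pi / Real.Gamma (a + 1 / 2) := by
  have hd : ∀ x ∈ Ioo (0:ℝ) 1, HasDerivWithinAt (fun u : ℝ => u / (1 - u))
      (1 / (1 - x) ^ 2) (Ioo 0 1) x := by
    intro x hx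
    have h1 : 1 - x ≠ 0 := by linarith [hx.2]
    have := (hasDerivAt_id x).div ((hasDerivAt_id x).const_sub 1) h1
    refine (this.congr_deriv ?_).hasDerivWithinAt
    simp
  have hinj : InjOn (fun u : ℝ => u / (1 - u)) (Ioo 0 1) := by
    intro x hx y hy h
    have h1 : 1 - x ≠ 0 := by linarith [hx.2]
    have h2 : 1 - y ≠ 0 := by linarith [hy.2]
    simp only at h
    rw [div_eq_div_iff h1 h2] at h
    linarith
  have hcongr : EqOn (fun x : ℝ => |1 / (1 - x) ^ 2| • ((x / (1 - x)) ^ (a - 1) *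
      (1 + x / (1 - x)) ^ ((1 / 2 : ℝ) - a - 1)))
      (fun x : ℝ => x ^ (a - 1) * (1 - x) ^ ((1 / 2 : ℝ) - 1)) (Ioo 0 1) := by
    intro x hx
    have h0 := hx.1
    have h1 : 0 < 1 - x := by linarith [hx.2]
    have h2 : 1 + x / (1 - x) = (1 - x)⁻¹ := by field_simp; ring
    simp only [smul_eq_mul]
    rw [h2, abs_of_pos (by positivity), Real.div_rpow h0.le h1.le, Real.inv_rpow h1.le,
      one_div, div_eq_mul_inv, ← Real.rpow_neg h1.le, ← Real.rpow_neg h1.le,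
      ← Real.rpow_natCast, ← Real.rpow_neg h1.le]
    have : (1 - x) ^ ((1 / 2 : ℝ) - 1) = (1 - x) ^ (-((2 : ℕ) : ℝ)) * (1 - x) ^ (-(a - 1)) *
        (1 - x) ^ (-((1 / 2 : ℝ) - a - 1)) := by
      rw [← Real.rpow_add h1, ← Real.rpow_add h1]
      congr 1
      push_cast
      ring
    rw [this]
    ring
  have hb := aux_beta ha (b := 1 / 2) (by norm_num)
  rw [← aux_image]
  constructor
  · rw [integrableOn_image_iff_integrableOn_abs_deriv_smul measurableSet_Ioo hd hinj]
    exact (integrableOn_congr_fun hcongr measurableSet_Ioo).2 hb.1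
  · rw [integral_image_eq_integral_abs_deriv_smul measurableSet_Ioo hd hinj,
      setIntegral_congr_fun measurableSet_Ioo hcongr, hb.2, Real.Gamma_one_half_eq]

/-- The integral in `tricomiU a (1/2) z`. -/
noncomputable def auxI (a z : ℝ) : ℝ :=
  ∫ t in Ioi (0:ℝ), Real.exp (-z * t) * t ^ (a - 1) * (1 + t) ^ ((1 / 2 : ℝ) - a - 1)

lemma aux_meas (a z : ℝ) : Measurable
    (fun t : ℝ => Real.exp (-z * t) * t ^ (a - 1) * (1 + t) ^ ((1 / 2 : ℝ) - a - 1)) := by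
  fun_prop

lemma aux_bound {a z t : ℝ} (hz : 0 ≤ z) (ht : 0 < t) :
    ‖Real.exp (-z * t) * t ^ (a - 1) * (1 + t) ^ ((1 / 2 : ℝ) - a - 1)‖ ≤
      t ^ (a - 1) * (1 + t) ^ ((1 / 2 : ℝ) - a - 1) := by
  rw [Real.norm_of_nonneg (by positivity), mul_assoc]
  refine mul_le_of_le_one_left (by positivity) (Real.exp_le_one_iff.2 ?_)
  nlinarith

lemma aux_int {a z : ℝ} (ha : 0 < a) (hz : 0 ≤ z) : IntegrableOn
    (fun t : ℝ => Real.exp (-z * t) * t ^ (a - 1) * (1 + t) ^ ((1 / 2 : ℝ) - a - 1)) (Ioi 0) := by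
  refine Integrable.mono' (aux_main ha).1 (aux_meas a z).aestronglyMeasurable ?_
  exact ae_restrict_of_forall_mem measurableSet_Ioi fun t ht => aux_bound hz ht

lemma aux_anti {a z w : ℝ} (ha : 0 < a) (hz : 0 ≤ z) (hzw : z < w) : auxI a w < auxI a z := by
  have hw : 0 ≤ w := hz.trans hzw.le
  have key : ∀ t ∈ Ioi (0:ℝ), 0 < Real.exp (-z * t) * t ^ (a - 1) * (1 + t) ^ ((1 / 2 : ℝ) - a - 1)
      - Real.exp (-w * t) * t ^ (a - 1) * (1 + t) ^ ((1 / 2 : ℝ) - a - 1) := by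
    intro t ht
    have ht : 0 < t := ht
    have : Real.exp (-w * t) < Real.exp (-z * t) := Real.exp_lt_exp.2 (by nlinarith)
    rw [sub_pos]
    gcongr
  rw [← sub_pos, auxI, auxI, ← integral_sub (aux_int ha hz) (aux_int ha hw),
    setIntegral_pos_iff_support_of_nonneg_ae]
  · refine lt_of_lt_of_le ?_ (measure_mono (s := Ioi (0:ℝ)) ?_)
    · simp
    · exact fun t ht => ⟨(key t ht).ne', ht⟩
  · exact ae_restrict_of_forall_mem measurableSet_Ioi fun t ht => (key t ht).le
  · exact (aux_int ha hz).sub (aux_int ha hw)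

lemma aux_pos {a z : ℝ} (ha : 0 < a) (hz : 0 ≤ z) : 0 < auxI a z := by
  refine lt_of_le_of_lt ?_ (aux_anti ha hz (lt_add_one z))
  refine setIntegral_nonneg measurableSet_Ioi fun t ht => ?_
  have ht : 0 < t := ht
  positivity

lemma aux_zero {a : ℝ} (ha : 0 < a) : Tendsto (auxI a) (𝓝[>] 0)
    (𝓝 (Real.Gamma a * √Real.pi / Real.Gamma (a + 1 / 2))) := by
  rw [← (aux_main ha).2]
  refine tendsto_integral_filter_of_dominated_convergence _
    (Eventually.of_forall fun z => (aux_meas a z).aestronglyMeasurable) ?_ (aux_main ha).1 ?_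
  · filter_upwards [self_mem_nhdsWithin] with z hz
    exact ae_restrict_of_forall_mem measurableSet_Ioi fun t ht => aux_bound (le_of_lt hz) ht
  · refine Eventually.of_forall fun t => ?_
    have : Continuous (fun z : ℝ =>
      Real.exp (-z * t) * t ^ (a - 1) * (1 + t) ^ ((1 / 2 : ℝ) - a - 1)) := by fun_prop
    have h := (this.tendsto 0).mono_left (nhdsWithin_le_nhds (s := Ioi 0))
    simpa using h

lemma aux_top {a : ℝ} (ha : 0 < a) : Tendsto (auxI a) atTop (𝓝 0) := by
  have h0 : (0:ℝ) = ∫ t in Ioi (0:ℝ), (0:ℝ) := by simp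
  rw [h0]
  refine tendsto_integral_filter_of_dominated_convergence _
    (Eventually.of_forall fun z => (aux_meas a z).aestronglyMeasurable) ?_ (aux_main ha).1 ?_
  · filter_upwards [eventually_ge_atTop 0] with z hz
    exact ae_restrict_of_forall_mem measurableSet_Ioi fun t ht => aux_bound hz ht
  · refine ae_restrict_of_forall_mem measurableSet_Ioi fun t ht => ?_
    have ht : 0 < t := ht
    have h : Tendsto (fun z : ℝ => Real.exp (-z * t)) atTop (𝓝 0) := by
      refine Real.tendsto_exp_atBot.comp ?_
      simp only [neg_mul]
      exact tendsto_neg_atTop_atBot.comp (tendsto_id.atTop_mul_const ht)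
    simpa using (h.mul_const (t ^ (a - 1))).mul_const ((1 + t) ^ ((1 / 2 : ℝ) - a - 1))

/-- `f₁(x) = 1/U(α/2+1/2, 1/2, x²ω²)` is strictly increasing on `(0,∞)`,
tends to `Γ(α/2+1)/√π` as `x → 0⁺`, and tends to `+∞` as `x → +∞`. -/
theorem statement_7 (α ω : ℝ) (hα : 0 < α) (hω : 0 < ω)
    (f₁ : ℝ → ℝ)
    (hf₁ : ∀ x : ℝ, 0 < x → f₁ x = 1 / tricomiU (α / 2 + 1 / 2) (1 / 2) (x ^ 2 * ω ^ 2)) :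
    StrictMonoOn f₁ (Set.Ioi 0) ∧
    Filter.Tendsto f₁ (nhdsWithin 0 (Set.Ioi 0))
      (nhds (Real.Gamma (α / 2 + 1) / Real.sqrt Real.pi)) ∧
    Filter.Tendsto f₁ Filter.atTop Filter.atTop := by
  have ha : 0 < α / 2 + 1 / 2 := by positivity
  have hG := Real.Gamma_pos_of_pos ha
  have hG' : 0 < Real.Gamma (α / 2 + 1) := Real.Gamma_pos_of_pos (by positivity)
  have hf : ∀ x : ℝ, 0 < x → f₁ x =
      Real.Gamma (α / 2 + 1 / 2) * (auxI (α / 2 + 1 / 2) (x ^ 2 * ω ^ 2))⁻¹ := by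
    intro x hx
    rw [hf₁ x hx, tricomiU, auxI, one_div, mul_inv, one_div, inv_inv]
  refine ⟨?_, ?_, ?_⟩
  · intro x hx y hy hxy
    have hx : 0 < x := hx
    have hy : 0 < y := hy
    rw [hf x hx, hf y hy]
    refine mul_lt_mul_of_pos_left ?_ hG
    refine inv_strictAnti₀ (aux_pos ha (by positivity)) (aux_anti ha (by positivity) ?_)
    gcongr
  · have hlim : Tendsto (fun x : ℝ => x ^ 2 * ω ^ 2) (𝓝[>] 0) (𝓝[>] 0) := by
      refine tendsto_nhdsWithin_iff.2 ⟨?_, ?_⟩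
      · have : Continuous (fun x : ℝ => x ^ 2 * ω ^ 2) := by fun_prop
        simpa using (this.tendsto 0).mono_left (nhdsWithin_le_nhds (s := Ioi 0))
      · filter_upwards [self_mem_nhdsWithin] with x hx
        have hx : 0 < x := hx
        exact mem_Ioi.2 (by positivity)
    have e : α / 2 + 1 / 2 + 1 / 2 = α / 2 + 1 := by ring
    have h := (aux_zero ha).comp hlim
    rw [e] at h
    have hpi : 0 < √Real.pi := Real.sqrt_pos.2 Real.pi_pos
    have h2 := (h.inv₀ (by positivity)).const_mul (Real.Gamma (α / 2 + 1 / 2))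
    have e2 : Real.Gamma (α / 2 + 1 / 2) * (Real.Gamma (α / 2 + 1 / 2) * √Real.pi /
        Real.Gamma (α / 2 + 1))⁻¹ = Real.Gamma (α / 2 + 1) / √Real.pi := by
      field_simp
    rw [e2] at h2
    refine h2.congr' ?_
    filter_upwards [self_mem_nhdsWithin] with x hx
    exact (hf x hx).symm
  · have hlim : Tendsto (fun x : ℝ => x ^ 2 * ω ^ 2) atTop atTop :=
      (tendsto_pow_atTop (by norm_num)).atTop_mul_const (by positivity)
    have h : Tendsto (fun x : ℝ => auxI (α / 2 + 1 / 2) (x ^ 2 * ω ^ 2)) atTop (𝓝[>] 0) :=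
      tendsto_nhdsWithin_iff.2 ⟨(aux_top ha).comp hlim,
        Eventually.of_forall fun x => aux_pos ha (by positivity)⟩
    refine ((tendsto_inv_nhdsGT_zero.comp h).const_mul_atTop hG).congr' ?_
    filter_upwards [eventually_gt_atTop 0] with x hx
    exact (hf x hx).symm
end

section
/- Let α > 0, d_l > 0, h₀ > 0, k_l > 0, and define f₂(x) = 1 / [ M(α/2 + 1/2, 1/2, x²) + (2√(d_l) h₀ / k_l) x M(α/2 + 1, 3/2, x²) ] for x > 0. Then f₂ is strictly decreasing on (0,∞), f₂(x) tends to 1 as x → 0⁺, and f₂(x) tends to 0 as x → +∞. -/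
lemma poch_pos {a : ℝ} (ha : 0 < a) (s : ℕ) : 0 < poch a s :=
  Finset.prod_pos fun i _ => by positivity

lemma poch_le {a b : ℝ} (ha : 0 < a) (hb : 0 < b) (s : ℕ) :
    poch a s ≤ (1 + a / b) ^ s * poch b s := by
  have h : (1 + a / b) ^ s * poch b s = ∏ i ∈ Finset.range s, ((1 + a / b) * (b + i)) := by
    rw [Finset.prod_mul_distrib]
    simp [poch]
  rw [h]
  refine Finset.prod_le_prod (fun i _ => by positivity) fun i _ => ?_
  have h1 : (1 + a / b) * (b + i) = b + i + a + a / b * i := by field_simp; ring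
  rw [h1]
  have : 0 ≤ a / b * i := by positivity
  linarith

lemma coef_pos {a b : ℝ} (ha : 0 < a) (hb : 0 < b) (s : ℕ) :
    0 < poch a s / (poch b s * (Nat.factorial s)) := by
  have := poch_pos ha s
  have := poch_pos hb s
  positivity

lemma kummer_summable {a b z : ℝ} (ha : 0 < a) (hb : 0 < b) (hz : 0 ≤ z) :
    Summable fun s : ℕ => poch a s / (poch b s * (Nat.factorial s)) * z ^ s := by
  refine Summable.of_nonneg_of_le (fun s => ?_) (fun s => ?_)
    (Real.summable_pow_div_factorial ((1 + a / b) * z))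
  · have := coef_pos ha hb s
    positivity
  · have h1 := poch_pos hb s
    have h2 := poch_le ha hb s
    have h3 : poch a s / (poch b s * (Nat.factorial s)) ≤ (1 + a / b) ^ s / Nat.factorial s := by
      rw [div_le_div_iff₀ (by positivity) (by positivity)]
      have h4 : (0 : ℝ) ≤ Nat.factorial s := by positivity
      nlinarith [mul_le_mul_of_nonneg_right h2 h4]
    rw [mul_pow, mul_div_right_comm]
    exact mul_le_mul_of_nonneg_right h3 (by positivity)

lemma kummer_lower {a b z : ℝ} (ha : 0 < a) (hb : 0 < b) (hz : 0 ≤ z) :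
    1 + a / b * z ≤ kummerM a b z := by
  have := (kummer_summable ha hb hz).sum_le_tsum (Finset.range 2) (fun s _ => by
    have := coef_pos ha hb s
    positivity)
  simpa [Finset.sum_range_succ, poch, kummerM] using this

lemma kummer_mono {a b z w : ℝ} (ha : 0 < a) (hb : 0 < b) (hz : 0 ≤ z) (hw : z < w) :
    kummerM a b z < kummerM a b w := by
  refine Summable.tsum_lt_tsum (i := 1) (fun s => ?_) ?_ (kummer_summable ha hb hz)
    (kummer_summable ha hb (hz.trans hw.le))
  · exact mul_le_mul_of_nonneg_left (pow_le_pow_left₀ hz hw.le s) (coef_pos ha hb s).le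
  · simpa only [pow_one] using mul_lt_mul_of_pos_left hw (coef_pos ha hb 1)

lemma kummer_upper {a b z : ℝ} (ha : 0 < a) (hb : 0 < b) (hz : 0 ≤ z) (hz1 : z ≤ 1) :
    kummerM a b z ≤ 1 + z * kummerM a b 1 := by
  have hs := kummer_summable ha hb hz
  have hs1 := kummer_summable ha hb zero_le_one
  have h2 : ∑' s : ℕ, poch a (s+1) / (poch b (s+1) * (Nat.factorial (s+1))) * z ^ (s+1) ≤
      z * ∑' s : ℕ, poch a (s+1) / (poch b (s+1) * (Nat.factorial (s+1))) * 1 ^ (s+1) := by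
    rw [← tsum_mul_left]
    refine Summable.tsum_le_tsum (fun s => ?_) ((summable_nat_add_iff 1).2 hs)
      (((summable_nat_add_iff 1).2 hs1).mul_left z)
    have h3 : z ^ (s+1) ≤ z := by
      rw [pow_succ]
      exact mul_le_of_le_one_left hz (pow_le_one₀ hz hz1)
    have := mul_le_mul_of_nonneg_left h3 (coef_pos ha hb (s+1)).le
    rw [one_pow, mul_one]
    linarith
  have h4 : kummerM a b 1 = 1 +
      ∑' s : ℕ, poch a (s+1) / (poch b (s+1) * (Nat.factorial (s+1))) * 1 ^ (s+1) := by
    rw [kummerM, hs1.tsum_eq_zero_add]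
    simp [poch]
  have h5 : kummerM a b z = 1 +
      ∑' s : ℕ, poch a (s+1) / (poch b (s+1) * (Nat.factorial (s+1))) * z ^ (s+1) := by
    rw [kummerM, hs.tsum_eq_zero_add]
    simp [poch]
  rw [h5, h4]
  linarith

/-- `f₂(x) = 1/[M(α/2+1/2,1/2,x²) + (2√(d_l)h₀/k_l) x M(α/2+1,3/2,x²)]`
is strictly decreasing on `(0,∞)`, tends to `1` as `x → 0⁺`, and tends to `0` as `x → +∞`. -/
theorem statement_8 (α dl h₀ kl : ℝ) (hα : 0 < α) (hdl : 0 < dl) (hh₀ : 0 < h₀) (hkl : 0 < kl)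
    (f₂ : ℝ → ℝ)
    (hf₂ : ∀ x : ℝ, 0 < x → f₂ x =
      1 / (kummerM (α / 2 + 1 / 2) (1 / 2) (x ^ 2)
            + 2 * Real.sqrt dl * h₀ / kl * x * kummerM (α / 2 + 1) (3 / 2) (x ^ 2))) :
    StrictAntiOn f₂ (Set.Ioi 0) ∧
    Filter.Tendsto f₂ (nhdsWithin 0 (Set.Ioi 0)) (nhds 1) ∧
    Filter.Tendsto f₂ Filter.atTop (nhds 0) := by
  set c := 2 * Real.sqrt dl * h₀ / kl with hc
  have hc0 : 0 < c := by
    have := Real.sqrt_pos.2 hdl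
    positivity
  have ha1 : 0 < α / 2 + 1 / 2 := by positivity
  have ha2 : 0 < α / 2 + 1 := by positivity
  have hb1 : (0:ℝ) < 1 / 2 := by norm_num
  have hb2 : (0:ℝ) < 3 / 2 := by norm_num
  set a₁ := α / 2 + 1 / 2
  set a₂ := α / 2 + 1
  have hge1 : ∀ x : ℝ, 1 ≤ kummerM a₁ (1/2) (x^2) := fun x => by
    have := kummer_lower ha1 hb1 (sq_nonneg x)
    have : 0 ≤ a₁ / (1/2) * x^2 := by positivity
    linarith
  have hge2 : ∀ x : ℝ, 1 ≤ kummerM a₂ (3/2) (x^2) := fun x => by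
    have := kummer_lower ha2 hb2 (sq_nonneg x)
    have : 0 ≤ a₂ / (3/2) * x^2 := by positivity
    linarith
  refine ⟨?_, ?_, ?_⟩
  · intro x hx y hy hxy
    have hx0 : 0 < x := hx
    have hy0 : 0 < y := hy
    rw [hf₂ x hx, hf₂ y hy]
    have hsq : x^2 < y^2 := by nlinarith
    have m1 := kummer_mono ha1 hb1 (sq_nonneg x) hsq
    have m2 := kummer_mono ha2 hb2 (sq_nonneg x) hsq
    have g1 := hge1 x
    have g2 := hge2 x
    have m3 : c * x * kummerM a₂ (3/2) (x^2) < c * y * kummerM a₂ (3/2) (y^2) := by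
      gcongr
    have : 0 < c * x * kummerM a₂ (3/2) (x^2) := by positivity
    exact one_div_lt_one_div_of_lt (by linarith) (by linarith)
  · have hD : Filter.Tendsto (fun x : ℝ => kummerM a₁ (1/2) (x^2)
        + c * x * kummerM a₂ (3/2) (x^2)) (nhdsWithin 0 (Set.Ioi 0)) (nhds 1) := by
      have hu : Filter.Tendsto (fun x : ℝ => (1 + x^2 * kummerM a₁ (1/2) 1)
          + c * x * (1 + x^2 * kummerM a₂ (3/2) 1)) (nhdsWithin 0 (Set.Ioi 0)) (nhds 1) := by
        have : Continuous (fun x : ℝ => (1 + x^2 * kummerM a₁ (1/2) 1)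
          + c * x * (1 + x^2 * kummerM a₂ (3/2) 1)) := by fun_prop
        have h := (this.tendsto 0).mono_left (nhdsWithin_le_nhds (s := Set.Ioi 0))
        simpa using h
      refine tendsto_of_tendsto_of_tendsto_of_le_of_le' tendsto_const_nhds hu ?_ ?_
      · filter_upwards [self_mem_nhdsWithin] with x hx
        have hx0 : 0 < x := hx
        have g1 := hge1 x
        have g2 := hge2 x
        have : 0 < c * x * kummerM a₂ (3/2) (x^2) := by positivity
        linarith
      · filter_upwards [Ioo_mem_nhdsGT (zero_lt_one (α := ℝ))] with x hx
        have hx0 : 0 < x := hx.1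
        have hx1 : x^2 ≤ 1 := pow_le_one₀ hx.1.le hx.2.le
        have u1 := kummer_upper ha1 hb1 (sq_nonneg x) hx1
        have u2 := kummer_upper ha2 hb2 (sq_nonneg x) hx1
        gcongr
    have h := hD.inv₀ one_ne_zero
    rw [inv_one] at h
    refine h.congr' ?_
    filter_upwards [self_mem_nhdsWithin] with x hx
    rw [hf₂ x hx]
    exact (one_div _).symm
  · have hD : Filter.Tendsto (fun x : ℝ => kummerM a₁ (1/2) (x^2)
        + c * x * kummerM a₂ (3/2) (x^2)) Filter.atTop Filter.atTop := by
      refine Filter.tendsto_atTop_mono' _ ?_ (Filter.tendsto_id.const_mul_atTop hc0)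
      filter_upwards [Filter.eventually_gt_atTop 0] with x hx
      have g1 := hge1 x
      have g2 := hge2 x
      have : 0 < c * x := by positivity
      simp only [id]
      nlinarith
    refine hD.inv_tendsto_atTop.congr' ?_
    filter_upwards [Filter.eventually_gt_atTop 0] with x hx
    rw [hf₂ x hx]
    exact (one_div _).symm
end

section
/- Let α > 0 and let k_l, k_s, d_l, d_s, γ, T_i, T_∞, h₀ be positive constants with ω = √(d_l/d_s). If 0 < h₀ ≤ 2^α Γ(α/2 + 1) k_s T_i d_s^{(α−1)/2} / (T_∞ √π), then there is NO x > 0 satisfying equation (24): −(k_s T_i d_s^{(α−1)/2} / (γ d_l^{(α+1)/2})) f₁(x) + (h₀ T_∞ / (γ 2^α d_l^{(α+1)/2})) f₂(x) = x^{α+1}. -/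
open MeasureTheory Set in
lemma beta_real_aux (a b : ℝ) (ha : 0 < a) (hb : 0 < b) :
    IntegrableOn (fun x : ℝ => x ^ (a - 1) * (1 - x) ^ (b - 1)) (Ioo 0 1) ∧
    ∫ x in Ioo (0:ℝ) 1, x ^ (a - 1) * (1 - x) ^ (b - 1)
      = Real.Gamma a * Real.Gamma b / Real.Gamma (a + b) := by
  have hint := Complex.betaIntegral_convergent (u := a) (v := b) (by simpa) (by simpa)
  rw [intervalIntegrable_iff_integrableOn_Ioc_of_le (by simp)] at hint
  have hcongr : EqOn (fun x : ℝ => RCLike.re ((x : ℂ) ^ ((a : ℂ) - 1) * (1 - (x : ℂ)) ^ ((b : ℂ) - 1)))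
      (fun x : ℝ => x ^ (a - 1) * (1 - x) ^ (b - 1)) (Ioc 0 1) := by
    rintro x ⟨hx1, hx2⟩
    beta_reduce
    norm_cast
    rw [← Complex.ofReal_cpow, ← Complex.ofReal_cpow, RCLike.re_to_complex,
        Complex.re_mul_ofReal, Complex.ofReal_re]
    all_goals linarith
  have hre : IntegrableOn (fun x : ℝ => x ^ (a - 1) * (1 - x) ^ (b - 1)) (Ioc 0 1) :=
    IntegrableOn.congr_fun (Integrable.re hint) hcongr measurableSet_Ioc
  refine ⟨hre.mono_set Ioo_subset_Ioc_self, ?_⟩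
  have h := ProbabilityTheory.beta_eq_betaIntegralReal a b ha hb
  rw [ProbabilityTheory.beta] at h
  rw [h, Complex.betaIntegral, intervalIntegral.integral_of_le (by norm_num),
    ← integral_Ioc_eq_integral_Ioo, ← RCLike.re_to_complex, ← integral_re hint]
  exact (setIntegral_congr_fun measurableSet_Ioc hcongr).symm

open MeasureTheory Set in
lemma beta_prime_aux (a : ℝ) (ha : 0 < a) :
    IntegrableOn (fun t : ℝ => t ^ (a - 1) * (1 + t) ^ (1 / 2 - a - 1)) (Ioi 0) ∧
    ∫ t in Ioi (0:ℝ), t ^ (a - 1) * (1 + t) ^ (1 / 2 - a - 1)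
      = Real.Gamma a * Real.sqrt Real.pi / Real.Gamma (a + 1 / 2) := by
  obtain ⟨hi, he⟩ := beta_real_aux a (1 / 2) ha (by norm_num)
  rw [Real.Gamma_one_half_eq] at he
  have himg : (fun u : ℝ => u / (1 - u)) '' Ioo 0 1 = Ioi 0 := by
    ext t
    constructor
    · rintro ⟨u, ⟨h0, h1⟩, rfl⟩
      exact div_pos h0 (by linarith)
    · intro ht
      have ht' : 0 < t := ht
      refine ⟨t / (1 + t), ⟨by positivity, ?_⟩, ?_⟩
      · rw [div_lt_one (by positivity)]; linarith
      · have : (1 + t) ≠ 0 := by positivity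
        field_simp
        ring
  have hd : ∀ u ∈ Ioo (0:ℝ) 1,
      HasDerivWithinAt (fun u : ℝ => u / (1 - u)) (1 / (1 - u) ^ 2) (Ioo 0 1) u := by
    rintro u ⟨h0, h1⟩
    have h1' : (1 - u) ≠ 0 := by linarith
    have := ((hasDerivAt_id u).div ((hasDerivAt_id u).const_sub 1) h1').hasDerivWithinAt (s := Ioo 0 1)
    convert! this using 1
    simp
  have hinj : InjOn (fun u : ℝ => u / (1 - u)) (Ioo 0 1) := by
    rintro u ⟨h0, h1⟩ v ⟨h2, h3⟩ h
    have h1' : (1 - u) ≠ 0 := by linarith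
    have h3' : (1 - v) ≠ 0 := by linarith
    simp only at h
    rw [div_eq_div_iff h1' h3'] at h
    linarith
  have hcongr : EqOn (fun u : ℝ => |1 / (1 - u) ^ 2| •
      ((u / (1 - u)) ^ (a - 1) * (1 + u / (1 - u)) ^ (1 / 2 - a - 1)))
      (fun x : ℝ => x ^ (a - 1) * (1 - x) ^ ((1 / 2 : ℝ) - 1)) (Ioo 0 1) := by
    rintro u ⟨h0, h1⟩
    have h1' : 0 < 1 - u := by linarith
    have e1 : 1 + u / (1 - u) = (1 - u)⁻¹ := by field_simp; ring
    simp only [smul_eq_mul]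
    rw [abs_of_nonneg (by positivity), e1, Real.div_rpow h0.le h1'.le, Real.inv_rpow h1'.le,
      ← Real.rpow_neg h1'.le, ← Real.rpow_natCast, div_eq_mul_inv (u ^ (a - 1)), ← Real.rpow_neg h1'.le, one_div,
      ← Real.rpow_neg h1'.le]
    have e2 : (1 - u) ^ (1 / 2 - 1 : ℝ) = (1 - u) ^ (-((2:ℕ):ℝ)) * (1 - u) ^ (-(a - 1)) *
        (1 - u) ^ (-(1 / 2 - a - 1)) := by
      rw [← Real.rpow_add h1', ← Real.rpow_add h1']
      congr 1
      push_cast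
      ring
    rw [e2]; norm_num; ring
  constructor
  · rw [← himg, integrableOn_image_iff_integrableOn_abs_deriv_smul measurableSet_Ioo hd hinj]
    exact hi.congr_fun hcongr.symm measurableSet_Ioo
  · rw [← himg, integral_image_eq_integral_abs_deriv_smul measurableSet_Ioo hd hinj,
      setIntegral_congr_fun measurableSet_Ioo hcongr, he]

open MeasureTheory Set in
lemma tricomi_aux (a z : ℝ) (ha : 0 < a) (hz : 0 ≤ z) :
    0 < tricomiU a (1 / 2) z ∧ 
      tricomiU a (1 / 2) z ≤ Real.sqrt Real.pi / Real.Gamma (a + 1 / 2) := by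
  obtain ⟨hi, he⟩ := beta_prime_aux a ha
  have hle : ∀ t ∈ Ioi (0:ℝ), Real.exp (-z * t) * t ^ (a - 1) * (1 + t) ^ (1 / 2 - a - 1)
      ≤ t ^ (a - 1) * (1 + t) ^ (1 / 2 - a - 1) := by
    intro t ht
    have ht' : 0 < t := ht
    have : Real.exp (-z * t) ≤ 1 := by
      rw [Real.exp_le_one_iff]; nlinarith
    rw [mul_assoc]
    exact mul_le_of_le_one_left (by positivity) this
  have hpos : ∀ t ∈ Ioi (0:ℝ), 0 < Real.exp (-z * t) * t ^ (a - 1) * (1 + t) ^ (1 / 2 - a - 1) := by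
    intro t ht
    have ht' : 0 < t := ht
    positivity
  have hi2 : IntegrableOn (fun t : ℝ => Real.exp (-z * t) * t ^ (a - 1) * (1 + t) ^ (1 / 2 - a - 1))
      (Ioi 0) := by
    refine Integrable.mono' hi (Measurable.aestronglyMeasurable (by fun_prop)) ?_
    refine ae_restrict_of_forall_mem measurableSet_Ioi fun t ht => ?_
    rw [Real.norm_of_nonneg (hpos t ht).le]
    exact hle t ht
  have hG := Real.Gamma_pos_of_pos ha
  constructor
  · refine mul_pos (by positivity) ?_
    rw [setIntegral_pos_iff_support_of_nonneg_ae
      (ae_restrict_of_forall_mem measurableSet_Ioi fun t ht => (hpos t ht).le) hi2]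
    rw [inter_eq_right.mpr (fun t ht => Function.mem_support.mpr (hpos t ht).ne')]
    simp
  · have := setIntegral_mono_on hi2 hi measurableSet_Ioi hle
    rw [he] at this
    unfold tricomiU
    calc _ ≤ 1 / Real.Gamma a * (Real.Gamma a * Real.sqrt Real.pi / Real.Gamma (a + 1 / 2)) := by
          gcongr
      _ = _ := by field_simp

lemma poch_pos_aux_s11 (a : ℝ) (ha : 0 < a) (s : ℕ) : 0 < poch a s :=
  Finset.prod_pos fun i _ => by positivity

lemma kummer_nonneg_aux (a b z : ℝ) (ha : 0 < a) (hb : 0 < b) (hz : 0 ≤ z) :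
    0 ≤ kummerM a b z :=
  tsum_nonneg fun s => by
    have := poch_pos_aux_s11 a ha s
    have := poch_pos_aux_s11 b hb s
    positivity

lemma kummer_one_le_aux (a b z : ℝ) (ha : 0 < a) (hb : 0 < b) (hz : 0 ≤ z) :
    1 ≤ kummerM a b z := by
  have hnn : ∀ s : ℕ, 0 ≤ poch a s / (poch b s * (Nat.factorial s)) * z ^ s := fun s => by
    have := poch_pos_aux_s11 a ha s
    have := poch_pos_aux_s11 b hb s
    positivity
  have hs : Summable fun s : ℕ => poch a s / (poch b s * (Nat.factorial s)) * z ^ s := by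
    refine summable_of_ratio_norm_eventually_le (r := 1 / 2) (by norm_num) ?_
    obtain ⟨N, hN⟩ := exists_nat_ge (2 * ((a / b + 1) * z))
    filter_upwards [Filter.eventually_ge_atTop N] with s hsN
    have hsN' : (N : ℝ) ≤ s := by exact_mod_cast hsN
    rw [Real.norm_of_nonneg (hnn _), Real.norm_of_nonneg (hnn _)]
    have h1 := poch_pos_aux_s11 b hb s
    have e : poch a (s + 1) / (poch b (s + 1) * (Nat.factorial (s + 1))) * z ^ (s + 1)
        = ((a + s) / (b + s) * z / (s + 1)) * (poch a s / (poch b s * (Nat.factorial s)) * z ^ s) := by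
      have h2 : b + (s : ℝ) ≠ 0 := by positivity
      simp only [poch, Finset.prod_range_succ, Nat.factorial_succ] at *
      push_cast
      field_simp
      ring
    rw [e]
    refine mul_le_mul_of_nonneg_right ?_ (hnn s)
    rw [div_le_iff₀ (by positivity)]
    have h3 : (a + s) / (b + s) ≤ a / b + 1 := by
      rw [div_le_iff₀ (by positivity)]
      have : (a / b + 1) * (b + s) = a + s + (b + a / b * s) := by field_simp; ring
      rw [this]
      have : 0 ≤ b + a / b * s := by positivity
      linarith
    have := mul_le_mul_of_nonneg_right h3 hz
    linarith
  have := hs.le_tsum 0 (fun s _ => hnn s)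
  simpa [poch] using! this

/-- if `0 < h₀ ≤ 2^α Γ(α/2+1) k_s T_i d_s^{(α−1)/2} / (T_∞ √π)` then
equation (24) has no positive solution. -/
theorem statement_11 (α kl ks dl ds γ Ti Tinf h₀ : ℝ)
    (hα : 0 < α) (hkl : 0 < kl) (hks : 0 < ks) (hdl : 0 < dl) (hds : 0 < ds)
    (hγ : 0 < γ) (hTi : 0 < Ti) (hTinf : 0 < Tinf) (hh₀ : 0 < h₀)
    (ω : ℝ) (hω : ω = Real.sqrt (dl / ds))
    (hcond : h₀ ≤ (2:ℝ) ^ α * Real.Gamma (α / 2 + 1) * ks * Ti * ds ^ ((α - 1) / 2)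
      / (Tinf * Real.sqrt Real.pi)) :
    ¬ ∃ x : ℝ, 0 < x ∧
      -(ks * Ti * ds ^ ((α - 1) / 2) / (γ * dl ^ ((α + 1) / 2))) *
          (1 / tricomiU (α / 2 + 1 / 2) (1 / 2) (x ^ 2 * ω ^ 2))
        + h₀ * Tinf / (γ * (2:ℝ) ^ α * dl ^ ((α + 1) / 2)) *
          (1 / (kummerM (α / 2 + 1 / 2) (1 / 2) (x ^ 2)
                + 2 * Real.sqrt dl * h₀ / kl * x * kummerM (α / 2 + 1) (3 / 2) (x ^ 2)))
        = x ^ (α + 1) := by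
  rintro ⟨x, hx, heq⟩
  have hrhs : 0 < x ^ (α + 1) := Real.rpow_pos_of_pos hx _
  obtain ⟨hU0, hU⟩ := tricomi_aux (α / 2 + 1 / 2) (x ^ 2 * ω ^ 2) (by positivity) (by positivity)
  have hM1 := kummer_one_le_aux (α / 2 + 1 / 2) (1 / 2) (x ^ 2) (by positivity) (by norm_num)
    (by positivity)
  have hM2 := kummer_nonneg_aux (α / 2 + 1) (3 / 2) (x ^ 2) (by positivity) (by norm_num)
    (by positivity)
  rw [show α / 2 + 1 / 2 + 1 / 2 = α / 2 + 1 by ring] at hU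
  have hG : 0 < Real.Gamma (α / 2 + 1) := Real.Gamma_pos_of_pos (by positivity)
  have hpi : 0 < Real.sqrt Real.pi := Real.sqrt_pos.mpr Real.pi_pos
  set U := tricomiU (α / 2 + 1 / 2) (1 / 2) (x ^ 2 * ω ^ 2)
  have hD : 1 ≤ kummerM (α / 2 + 1 / 2) (1 / 2) (x ^ 2)
      + 2 * Real.sqrt dl * h₀ / kl * x * kummerM (α / 2 + 1) (3 / 2) (x ^ 2) := by
    have : 0 ≤ 2 * Real.sqrt dl * h₀ / kl * x * kummerM (α / 2 + 1) (3 / 2) (x ^ 2) := by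
      positivity
    linarith
  set D := kummerM (α / 2 + 1 / 2) (1 / 2) (x ^ 2)
      + 2 * Real.sqrt dl * h₀ / kl * x * kummerM (α / 2 + 1) (3 / 2) (x ^ 2)
  have hf2 : 1 / D ≤ 1 := by
    rw [div_le_one (by linarith)]; exact hD
  have hf1 : Real.Gamma (α / 2 + 1) / Real.sqrt Real.pi ≤ 1 / U := by
    have := one_div_le_one_div_of_le hU0 hU
    rwa [one_div_div] at this
  have hp := Real.rpow_pos_of_pos hds ((α - 1) / 2)
  have hq := Real.rpow_pos_of_pos hdl ((α + 1) / 2)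
  have h2 := Real.rpow_pos_of_pos (two_pos : (0:ℝ) < 2) α
  set p := ds ^ ((α - 1) / 2)
  set q := dl ^ ((α + 1) / 2)
  set w := (2:ℝ) ^ α
  set G := Real.Gamma (α / 2 + 1)
  set P := Real.sqrt Real.pi
  have s1 : h₀ * Tinf / (γ * w * q) * (1 / D) ≤ h₀ * Tinf / (γ * w * q) :=
    mul_le_of_le_one_right (by positivity) hf2
  have s2 : ks * Ti * p / (γ * q) * (G / P) ≤ ks * Ti * p / (γ * q) * (1 / U) :=
    mul_le_mul_of_nonneg_left hf1 (by positivity)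
  have s3 : h₀ * Tinf / (γ * w * q) ≤ ks * Ti * p / (γ * q) * (G / P) := by
    calc h₀ * Tinf / (γ * w * q)
        ≤ (w * G * ks * Ti * p / (Tinf * P)) * Tinf / (γ * w * q) := by gcongr
      _ = _ := by field_simp
  rw [neg_mul] at heq
  linarith
end
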